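/- arXiv:0905.0254 — 3 statements merged into one kernel-verified Lean document; each statement's English description precedes it below -/
import Mathlib

section
/- For every supermartingale S : X^* → ℝ̄ and every situation s ∈ X^*, S(s) ≥ inf_{ω ∈ Γ(s)} limsup_{n→∞} S(ω^n). -/
open Filter Topology

namespace GTP

noncomputable section

/-- An *outer probability content* on a type `Y`: a functional on all
`EReal`-valued functions that is monotone, positively homogeneous,
subadditive, and maps real constants to themselves. -/
def IsOPC {Y : Type*} (E : (Y → EReal) → EReal) : Prop :=
  (∀ f g : Y → EReal, (∀ y, f y ≤ g y) → E f ≤ E g) ∧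
  (∀ (c : ℝ), 0 < c → ∀ f : Y → EReal,
    E (fun y => (c : EReal) * f y) = (c : EReal) * E f) ∧
  (∀ f g : Y → EReal, E (fun y => f y + g y) ≤ E f + E g) ∧
  (∀ c : ℝ, E (fun _ => (c : EReal)) = (c : EReal))

/-- The sum `Σ_{k=0}^∞ f k` of a series of extended reals,
as the supremum of its partial sums (the right notion for nonnegative terms). -/
def eseries (f : ℕ → EReal) : EReal := ⨆ n, ∑ k ∈ Finset.range n, f k

/-- A *superexpectation*: an outer probability content that is moreover
countably subadditive on nonnegative functions. -/
def IsSuperexpectation {Y : Type*} (E : (Y → EReal) → EReal) : Prop :=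
  IsOPC E ∧
  ∀ f : ℕ → Y → EReal, (∀ k y, 0 ≤ f k y) →
    E (fun y => eseries fun k => f k y) ≤ eseries fun k => E (f k)

variable {X : Type*}

/-- The length-`n` prefix `ω^n` of a sequence `ω ∈ Ω = X^∞`. -/
def pre (ω : ℕ → X) (n : ℕ) : List X := List.ofFn fun i : Fin n => ω i

/-- `Γ(s)`: the set of infinite extensions of the situation `s`. -/
def Gamma (s : List X) : Set (ℕ → X) := {ω | pre ω s.length = s}

/-- A *supermartingale* with respect to the outer probability contents
`E 0, E 1, …` (`E n` governs the trial played in situations of length `n`,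
i.e. `E n` is the paper's `E_{n+1}`). -/
def IsSupermartingale (E : ℕ → (X → EReal) → EReal) (S : List X → EReal) : Prop :=
  ∀ s : List X, E s.length (fun x => S (s ++ [x])) ≤ S s

/-- A *martingale*: equality holds at every situation. -/
def IsMartingale (E : ℕ → (X → EReal) → EReal) (S : List X → EReal) : Prop :=
  ∀ s : List X, E s.length (fun x => S (s ++ [x])) = S s

/-- A function to `EReal` bounded below by a real constant. -/
def BddBelowFn {Y : Type*} (S : Y → EReal) : Prop := ∃ c : ℝ, ∀ t, (c : EReal) ≤ S t

/-- The conditional upper expectation `Ē(ξ | s)`. -/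
def upExp (E : ℕ → (X → EReal) → EReal) (ξ : (ℕ → X) → EReal) (s : List X) : EReal :=
  sInf {a | ∃ S : List X → EReal, IsSupermartingale E S ∧ BddBelowFn S ∧
    (∀ ω ∈ Gamma s, ξ ω ≤ liminf (fun n => S (pre ω n)) atTop) ∧ S s = a}

/-- The conditional lower expectation `E̲(ξ | s) = −Ē(−ξ | s)`. -/
def lowExp (E : ℕ → (X → EReal) → EReal) (ξ : (ℕ → X) → EReal) (s : List X) : EReal :=
  - upExp E (fun ω => - ξ ω) s

/-- The indicator function of an event, with values in `EReal`. -/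
def ind (A : Set (ℕ → X)) : (ℕ → X) → EReal := A.indicator fun _ => 1

/-- The conditional upper probability `P̄(A | s)`. -/
def upProb (E : ℕ → (X → EReal) → EReal) (A : Set (ℕ → X)) (s : List X) : EReal :=
  upExp E (ind A) s

/-- The conditional lower probability `P̲(A | s)`. -/
def lowProb (E : ℕ → (X → EReal) → EReal) (A : Set (ℕ → X)) (s : List X) : EReal :=
  lowExp E (ind A) s

theorem pre_succ (ω : ℕ → X) (n : ℕ) : pre ω (n + 1) = pre ω n ++ [ω n] := by
  rw [pre, List.ofFn_succ_last]; rfl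

theorem pre_eq_take (ω : Stream' X) (n : ℕ) : pre ω n = ω.take n :=
  List.ext_getElem (List.length_ofFn.trans (Stream'.length_take n ω).symm) fun _ _ _ =>
    (List.getElem_ofFn _).trans (Stream'.take_get ..).symm

theorem pre_append_length_add (s : List X) (ω : Stream' X) (n : ℕ) :
    pre (s ++ₛ ω) (s.length + n) = s ++ pre ω n :=
  calc pre (s ++ₛ ω) (s.length + n) = (s ++ₛ ω).take (s.length + n) := pre_eq_take _ _
    _ = s ++ ω.take n := (Stream'.append_take ..).symm
    _ = s ++ pre ω n := by rw [pre_eq_take]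

theorem append_mem_Gamma (s : List X) (ω : Stream' X) : s ++ₛ ω ∈ Gamma s :=
  (pre_append_length_add s ω 0).trans (List.append_nil s)

theorem exists_forall_pre {P : List X → Prop} (nil : P [])
    (extend : ∀ t, P t → ∃ x, P (t ++ [x])) : ∃ ω : ℕ → X, ∀ n, P (pre ω n) := by
  choose next hnext using extend
  let path : ℕ → {t // P t} := Nat.rec ⟨[], nil⟩ fun _ t => ⟨t ++ [next t.1 t.2], hnext t.1 t.2⟩
  let ω : ℕ → X := fun n => next (path n).1 (path n).2
  have pre_eq_path : ∀ n, pre ω n = (path n).1 := by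
    intro n
    induction n with
    | zero => rfl
    | succ n ih => rw [pre_succ, ih]
  exact ⟨ω, fun n => pre_eq_path n ▸ (path n).2⟩

theorem exists_mem_Gamma_forall_pre {P : List X → Prop} {s : List X} (hs : P s)
    (extend : ∀ t, P t → ∃ x, P (t ++ [x])) :
    ∃ ω ∈ Gamma s, ∀ n ≥ s.length, P (pre ω n) := by
  obtain ⟨ω, hω⟩ : ∃ ω : ℕ → X, ∀ n, P (s ++ pre ω n) :=
    exists_forall_pre (P := fun t => P (s ++ t)) (by simpa using hs) fun t ht => by
      simpa only [List.append_assoc] using extend (s ++ t) ht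
  refine ⟨s ++ₛ ω, append_mem_Gamma s ω, fun n hn => ?_⟩
  obtain ⟨k, rfl⟩ := Nat.exists_eq_add_of_le hn
  exact pre_append_length_add s ω k ▸ hω k

theorem IsOPC.iInf_le {Y : Type*} {E : (Y → EReal) → EReal} (hE : IsOPC E) (f : Y → EReal) :
    ⨅ y, f y ≤ E f := by
  obtain ⟨mono, -, -, map_const⟩ := hE
  refine EReal.ge_of_forall_gt_iff_ge.mp fun c hc => ?_
  calc (c : EReal) = E (fun _ => c) := (map_const c).symm
    _ ≤ E f := mono _ _ fun y => hc.le.trans (_root_.iInf_le f y)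

/-- If `S t < c`, then some one-step continuation of `t` again has `S < c`; iterating from `s`
produces a path in `Gamma s` along which `S` stays below `c`. -/
theorem supermartingale_ge_iInf_limsup_general {α : Type*} [CompleteLinearOrder α]
    [DenselyOrdered α] (S : List X → α) (hS : ∀ t, ⨅ x, S (t ++ [x]) ≤ S t) (s : List X) :
    ⨅ ω ∈ Gamma s, limsup (fun n => S (pre ω n)) atTop ≤ S s := by
  refine le_of_forall_gt_imp_ge_of_dense fun c hc => ?_
  obtain ⟨ω, hω, hlt⟩ : ∃ ω ∈ Gamma s, ∀ n ≥ s.length, S (pre ω n) < c :=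
    exists_mem_Gamma_forall_pre hc fun t ht => iInf_lt_iff.mp ((hS t).trans_lt ht)
  calc ⨅ ω ∈ Gamma s, limsup (fun n => S (pre ω n)) atTop
      ≤ limsup (fun n => S (pre ω n)) atTop := iInf₂_le ω hω
    _ ≤ c := limsup_le_of_le (h := eventually_atTop.mpr ⟨s.length, fun n hn => (hlt n hn).le⟩)

/-- For every supermartingale `S` and every situation `s`,
`S(s) ≥ inf_{ω ∈ Γ(s)} limsup_{n→∞} S(ω^n)`. -/
theorem supermartingale_ge_iInf_limsup [Nonempty X]
    (E : ℕ → (X → EReal) → EReal) (hE : ∀ n, IsOPC (E n))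
    (S : List X → EReal) (hS : IsSupermartingale E S) (s : List X) :
    ⨅ ω ∈ Gamma s, limsup (fun n => S (pre ω n)) atTop ≤ S s := by
  exact supermartingale_ge_iInf_limsup_general S
    (fun t => ((hE t.length).iInf_le _).trans (hS t)) s

end

end GTP
end

section
/- For every function ξ : Ω → ℝ̄ and every situation s, Ē(ξ|s) = inf{ S(s) : S a bounded-below supermartingale with liminf_{n→∞} S(ω^n) ≥ ξ(ω) for all ω ∈ Ω }; that is, the infimum defining the conditional upper expectation is unchanged when the requirement 'for all ω ∈ Γ(s)' is strengthened to 'for all ω ∈ Ω'. -/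
open Filter Topology

namespace GTP

noncomputable section

variable {X : Type*}

section TopOutside

variable {E : ℕ → (X → EReal) → EReal} {S : List X → EReal} {s t : List X} {ω : ℕ → X}

theorem mem_Gamma_of_prefix_pre {n : ℕ} (h : s <+: pre ω n) : ω ∈ Gamma s :=
  List.ext_getElem (by simp [pre]) fun i _ hi => by simp [pre, h.getElem hi]

theorem BddBelowFn.mono {Y : Type*} {f g : Y → EReal} (hf : BddBelowFn f) (hfg : f ≤ g) :
    BddBelowFn g :=
  hf.imp fun _ hc y => (hc y).trans (hfg y)

open Classical in
/-- The process that agrees with `S` from the situation `s` onwards and is `⊤` at every situation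
not extending `s`, the proper prefixes of `s` included. It turns a supermartingale that dominates
`ξ` on `Γ(s)` into one that dominates `ξ` on all of `Ω` with the same value at `s`. -/
def topOutside (s : List X) (S : List X → EReal) : List X → EReal :=
  fun t => if s <+: t then S t else ⊤

theorem topOutside_of_prefix (h : s <+: t) : topOutside s S t = S t :=
  if_pos h

theorem topOutside_of_not_prefix (h : ¬ s <+: t) : topOutside s S t = ⊤ :=
  if_neg h

theorem le_topOutside (s : List X) (S : List X → EReal) : S ≤ topOutside s S := by
  intro t
  by_cases ht : s <+: t
  · exact (topOutside_of_prefix ht).ge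
  · exact le_top.trans_eq (topOutside_of_not_prefix ht).symm

theorem IsSupermartingale.topOutside (hS : IsSupermartingale E S) (s : List X) :
    IsSupermartingale E (topOutside s S) := by
  intro t
  by_cases ht : s <+: t
  · have h_succ (x : X) : s <+: t ++ [x] := ht.trans (List.prefix_append t [x])
    simpa only [topOutside_of_prefix ht, topOutside_of_prefix (h_succ _)] using hS t
  · exact le_top.trans_eq (topOutside_of_not_prefix ht).symm

theorem liminf_topOutside_of_notMem_Gamma (S : List X → EReal) (hω : ω ∉ Gamma s) :
    liminf (fun n => topOutside s S (pre ω n)) atTop = ⊤ := by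
  have h_top (n : ℕ) : topOutside s S (pre ω n) = ⊤ :=
    topOutside_of_not_prefix (mt mem_Gamma_of_prefix_pre hω)
  simp only [h_top, liminf_const]

theorem le_liminf_topOutside {ξ : (ℕ → X) → EReal}
    (hξ : ∀ ω ∈ Gamma s, ξ ω ≤ liminf (fun n => S (pre ω n)) atTop) (ω : ℕ → X) :
    ξ ω ≤ liminf (fun n => topOutside s S (pre ω n)) atTop := by
  by_cases hω : ω ∈ Gamma s
  · exact (hξ ω hω).trans (liminf_le_liminf (.of_forall fun n => le_topOutside s S (pre ω n)))
  · exact le_top.trans_eq (liminf_topOutside_of_notMem_Gamma S hω).symm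

end TopOutside

theorem upExp_eq_inf_over_all_general (E : ℕ → (X → EReal) → EReal) (ξ : (ℕ → X) → EReal)
    (s : List X) :
    upExp E ξ s =
      sInf {a | ∃ S : List X → EReal, IsSupermartingale E S ∧ BddBelowFn S ∧
        (∀ ω : ℕ → X, ξ ω ≤ liminf (fun n => S (pre ω n)) atTop) ∧ S s = a} := by
  refine congrArg sInf (Set.ext fun a => ⟨?_, ?_⟩)
  · rintro ⟨S, hS, h_bdd, hξ, rfl⟩
    exact ⟨topOutside s S, hS.topOutside s, h_bdd.mono (le_topOutside s S),
      le_liminf_topOutside hξ, topOutside_of_prefix List.prefix_rfl⟩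
  · rintro ⟨S, hS, h_bdd, hξ, hSs⟩
    exact ⟨S, hS, h_bdd, fun ω _ => hξ ω, hSs⟩

/-- The infimum defining `Ē(ξ|s)` is unchanged when the requirement
`∀ ω ∈ Γ(s)` is strengthened to `∀ ω ∈ Ω`. -/
theorem upExp_eq_inf_over_all [Nonempty X]
    (E : ℕ → (X → EReal) → EReal) (hE : ∀ n, IsOPC (E n))
    (ξ : (ℕ → X) → EReal) (s : List X) :
    upExp E ξ s =
      sInf {a | ∃ S : List X → EReal, IsSupermartingale E S ∧ BddBelowFn S ∧
        (∀ ω : ℕ → X, ξ ω ≤ liminf (fun n => S (pre ω n)) atTop) ∧ S s = a} :=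
  upExp_eq_inf_over_all_general E ξ s

end

end GTP
end

section
/- For every function ξ : Ω → ℝ̄ and every situation s, Ē(ξ|s) = inf{ S(s) : S a bounded-below supermartingale with limsup_{n→∞} S(ω^n) ≥ ξ(ω) for all ω ∈ Γ(s) }; that is, replacing liminf by limsup in the definition of the conditional upper expectation does not change its value. -/
open Filter Topology

namespace GTP

noncomputable section

variable {X : Type*}

/-!
Let `V ≥ 1` be a supermartingale and fix `ρ > 1`. Keep a reference level `r`, reset to the current
value of `V` whenever the two differ by more than a factor `ρ`, and always hold `1 / r` units of
`V`. Resetting the level from `r` to `t * r` earns `t - 1`, which exceeds the increase `log t` of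
`log r` by an amount bounded away from `0`. As `log r ≥ 0`, the resulting capital `T` is nonnegative
up to an additive constant, and it tends to infinity unless `r` is eventually constant, in which
case `V` eventually varies by at most a factor `ρ ^ 2`. Hence the liminf of `ρ ^ 2 * V + ε * T`
dominates the limsup of `V`, while its initial value is as close to that of `V` as we like.

`T` is a single betting strategy on `V` rather than an infinite mixture of upcrossing strategies:
its next value is an affine function of that of `V`, which makes it a supermartingale by finite
subadditivity alone.
-/

section RebalancedCapital

theorem sub_one_sub_log_le_of_mul_nonneg {a t : ℝ} (ha : 0 < a) (ht : 0 < t)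
    (h : 0 ≤ (t - a) * (a - 1)) : a - 1 - Real.log a ≤ t - 1 - Real.log t := by
  have log_ratio : Real.log t - Real.log a ≤ t / a - 1 := by
    rw [← Real.log_div ht.ne' ha.ne']
    exact Real.log_le_sub_one_of_pos (div_pos ht ha)
  have ratio_le : t / a - 1 ≤ t - a := by
    rw [div_sub_one ha.ne', div_le_iff₀ ha]
    linarith
  linarith

theorem exists_pos_le_sub_one_sub_log {ρ : ℝ} (hρ : 1 < ρ) :
    ∃ c > 0, ∀ t > 0, ¬ (1 ≤ ρ * t ∧ t ≤ ρ) → c ≤ t - 1 - Real.log t := by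
  have hρ_pos : 0 < ρ := one_pos.trans hρ
  have hρ_inv : ρ⁻¹ < 1 := inv_lt_one_of_one_lt₀ hρ
  refine ⟨min (ρ - 1 - Real.log ρ) (ρ⁻¹ - 1 - Real.log ρ⁻¹), lt_min ?_ ?_, fun t ht h_far => ?_⟩
  · exact sub_pos.2 (Real.log_lt_sub_one_of_pos hρ_pos hρ.ne')
  · exact sub_pos.2 (Real.log_lt_sub_one_of_pos (inv_pos.2 hρ_pos) hρ_inv.ne)
  rcases not_and_or.1 h_far with h_low | h_high
  · have ht_inv : t < ρ⁻¹ := (lt_inv_mul_iff₀ hρ_pos).2 (not_le.1 h_low) |>.trans_eq (mul_one _)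
    exact (min_le_right _ _).trans <| sub_one_sub_log_le_of_mul_nonneg (inv_pos.2 hρ_pos) ht <|
      mul_nonneg_of_nonpos_of_nonpos (by linarith) (by linarith)
  · exact (min_le_left _ _).trans <| sub_one_sub_log_le_of_mul_nonneg hρ_pos ht <|
      mul_nonneg (by linarith) (by linarith)

theorem tendsto_atTop_of_frequently_add_le {f : ℕ → ℝ} (hf : Monotone f) {c : ℝ} (hc : 0 < c)
    (h : ∃ᶠ n in atTop, f n + c ≤ f (n + 1)) : Tendsto f atTop atTop := by
  refine (tendsto_atTop_of_monotone hf).resolve_right ?_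
  rintro ⟨l, hl⟩
  have increments : Tendsto (fun n => f (n + 1) - f n) atTop (𝓝 0) := by
    simpa using (hl.comp (tendsto_add_atTop_nat 1)).sub hl
  obtain ⟨n, h_large, h_small⟩ := (h.and_eventually (increments.eventually_lt_const hc)).exists
  linarith

/-- The reference level of the rebalanced strategy: it is reset to the current value of `v` whenever
the two differ by more than a factor `ρ`. -/
def reference (ρ : ℝ) (v : ℕ → ℝ) : ℕ → ℝ
  | 0 => v 0
  | n + 1 =>
    if reference ρ v n ≤ ρ * v (n + 1) ∧ v (n + 1) ≤ ρ * reference ρ v n then reference ρ v n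
    else v (n + 1)

/-- The capital at time `n` of the strategy that holds `1 / reference ρ v i` units of `v` between
the times `i` and `i + 1`. The initial capital `1 + log (v 0)` keeps it nonnegative if `1 ≤ v`. -/
def capital (ρ : ℝ) (v : ℕ → ℝ) (n : ℕ) : ℝ :=
  1 + Real.log (v 0) + ∑ i ∈ Finset.range n, (v (i + 1) - v i) / reference ρ v i

/-- The part of the capital that is neither invested nor matched by the logarithm of the reference
level. It never decreases, and it grows by a fixed amount each time the level is reset. -/
def surplus (ρ : ℝ) (v : ℕ → ℝ) (n : ℕ) : ℝ :=
  capital ρ v n - v n / reference ρ v n - Real.log (reference ρ v n)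

variable {ρ : ℝ} {v w : ℕ → ℝ}

theorem reference_congr {n : ℕ} (h : ∀ k ≤ n, v k = w k) : reference ρ v n = reference ρ w n := by
  induction n with
  | zero => exact h 0 le_rfl
  | succ n ih => simp only [reference, ih fun k hk => h k (hk.trans n.le_succ), h (n + 1) le_rfl]

theorem capital_congr {n : ℕ} (h : ∀ k ≤ n, v k = w k) : capital ρ v n = capital ρ w n := by
  unfold capital
  rw [h 0 n.zero_le]
  congr 1
  refine Finset.sum_congr rfl fun i hi => ?_
  have hi : i < n := Finset.mem_range.1 hi
  rw [h (i + 1) hi, h i hi.le, reference_congr fun k hk => h k (hk.trans hi.le)]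

theorem capital_succ (ρ : ℝ) (v : ℕ → ℝ) (n : ℕ) :
    capital ρ v (n + 1) = capital ρ v n + (v (n + 1) - v n) / reference ρ v n := by
  rw [capital, capital, Finset.sum_range_succ, ← add_assoc]

theorem reference_mem_range (ρ : ℝ) (v : ℕ → ℝ) (n : ℕ) : reference ρ v n ∈ Set.range v := by
  induction n with
  | zero => exact ⟨0, rfl⟩
  | succ n ih =>
    rw [reference]
    split_ifs
    exacts [ih, ⟨n + 1, rfl⟩]

theorem reference_pos (hv : ∀ n, 0 < v n) (n : ℕ) : 0 < reference ρ v n := by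
  obtain ⟨k, hk⟩ := reference_mem_range ρ v n
  exact hk ▸ hv k

theorem one_le_reference (hv : ∀ n, 1 ≤ v n) (n : ℕ) : 1 ≤ reference ρ v n := by
  obtain ⟨k, hk⟩ := reference_mem_range ρ v n
  exact hk ▸ hv k

theorem reference_within_factor (hρ : 1 ≤ ρ) (hv : ∀ n, 0 ≤ v n) (n : ℕ) :
    reference ρ v n ≤ ρ * v n ∧ v n ≤ ρ * reference ρ v n := by
  have self_le (k : ℕ) : v k ≤ ρ * v k := le_mul_of_one_le_left (hv k) hρ
  cases n with
  | zero => exact ⟨self_le 0, self_le 0⟩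
  | succ n =>
    rw [reference]
    split_ifs with h_near
    exacts [h_near, ⟨self_le _, self_le _⟩]

theorem surplus_zero (hv : 0 < v 0) : surplus ρ v 0 = 0 := by
  simp [surplus, capital, reference, div_self hv.ne']

theorem surplus_succ (hv : ∀ n, 0 < v n) (n : ℕ) :
    surplus ρ v (n + 1) = surplus ρ v n + (reference ρ v (n + 1) / reference ρ v n - 1
      - Real.log (reference ρ v (n + 1) / reference ρ v n)) := by
  have hr := (reference_pos (ρ := ρ) hv n).ne'
  have hr' := (reference_pos (ρ := ρ) hv (n + 1)).ne'
  rw [Real.log_div hr' hr, surplus, surplus, capital_succ]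
  rcases ite_eq_or_eq (reference ρ v n ≤ ρ * v (n + 1) ∧ v (n + 1) ≤ ρ * reference ρ v n)
    (reference ρ v n) (v (n + 1)) with h_stay | h_reset
  · rw [show reference ρ v (n + 1) = reference ρ v n from h_stay, div_self hr]
    ring
  · rw [show reference ρ v (n + 1) = v (n + 1) from h_reset, div_self (hv (n + 1)).ne']
    ring

theorem monotone_surplus (hv : ∀ n, 0 < v n) : Monotone (surplus ρ v) := by
  refine monotone_nat_of_le_succ fun n => ?_
  rw [surplus_succ hv]
  have := Real.log_le_sub_one_of_pos
    (div_pos (reference_pos (ρ := ρ) hv (n + 1)) (reference_pos (ρ := ρ) hv n))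
  linarith

theorem surplus_le_capital (hv : ∀ n, 1 ≤ v n) (n : ℕ) : surplus ρ v n ≤ capital ρ v n := by
  have hr : 1 ≤ reference ρ v n := one_le_reference hv n
  have invested_nonneg : 0 ≤ v n / reference ρ v n :=
    div_nonneg (zero_le_one.trans (hv n)) (zero_le_one.trans hr)
  have log_nonneg : 0 ≤ Real.log (reference ρ v n) := Real.log_nonneg hr
  unfold surplus
  linarith

theorem capital_nonneg (hv : ∀ n, 1 ≤ v n) (n : ℕ) : 0 ≤ capital ρ v n := by
  have hv_pos (k : ℕ) : 0 < v k := one_pos.trans_le (hv k)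
  calc
    0 = surplus ρ v 0 := (surplus_zero (hv_pos 0)).symm
    _ ≤ surplus ρ v n := monotone_surplus hv_pos n.zero_le
    _ ≤ capital ρ v n := surplus_le_capital hv n

theorem tendsto_surplus_atTop (hρ : 1 < ρ) (hv : ∀ n, 0 < v n)
    (h_reset : ∃ᶠ n in atTop, reference ρ v (n + 1) ≠ reference ρ v n) :
    Tendsto (surplus ρ v) atTop atTop := by
  obtain ⟨c, hc, h_gain⟩ := exists_pos_le_sub_one_sub_log hρ
  refine tendsto_atTop_of_frequently_add_le (monotone_surplus hv) hc (h_reset.mono fun n hn => ?_)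
  have hr : 0 < reference ρ v n := reference_pos hv n
  rw [reference, ite_ne_left_iff] at hn
  rw [surplus_succ hv]
  refine add_le_add le_rfl (h_gain _ (div_pos (reference_pos hv _) hr) ?_)
  rw [reference, if_neg hn.1, mul_div_assoc', one_le_div₀ hr, div_le_iff₀ hr]
  exact hn.1

theorem tendsto_capital_or_le_sq_mul (hρ : 1 < ρ) (hv : ∀ n, 1 ≤ v n) :
    Tendsto (capital ρ v) atTop atTop ∨ ∃ N, ∀ m ≥ N, ∀ n ≥ N, v m ≤ ρ ^ 2 * v n := by
  have hv_pos (k : ℕ) : 0 < v k := one_pos.trans_le (hv k)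
  by_cases h_reset : ∃ᶠ n in atTop, reference ρ v (n + 1) ≠ reference ρ v n
  · exact .inl <| tendsto_atTop_mono (surplus_le_capital hv)
      (tendsto_surplus_atTop hρ hv_pos h_reset)
  · simp only [not_frequently, not_not, eventually_atTop] at h_reset
    obtain ⟨N, hN⟩ := h_reset
    have reference_eq (n : ℕ) (hn : N ≤ n) : reference ρ v n = reference ρ v N := by
      induction n, hn using Nat.le_induction with
      | base => rfl
      | succ n hn ih => rw [hN n hn, ih]
    have near := reference_within_factor hρ.le fun k => (hv_pos k).le
    refine .inr ⟨N, fun m hm n hn => ?_⟩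
    calc
      v m ≤ ρ * reference ρ v m := (near m).2
      _ = ρ * reference ρ v n := by rw [reference_eq m hm, reference_eq n hn]
      _ ≤ ρ * (ρ * v n) := by gcongr; exact (near n).1
      _ = ρ ^ 2 * v n := by ring

end RebalancedCapital

section Prefixes

theorem take_pre (ω : ℕ → X) {k n : ℕ} (h : k ≤ n) : (pre ω n).take k = pre ω k := by
  apply List.ext_getElem
  · simp [pre, h]
  · simp [pre]

theorem pre_add (ω : ℕ → X) (m n : ℕ) :
    pre ω (m + n) = pre ω m ++ pre (fun i => ω (m + i)) n := by
  simp [pre, List.ofFn_add]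

theorem pre_length_add {s : List X} {ω : ℕ → X} (hω : ω ∈ Gamma s) (n : ℕ) :
    pre ω (s.length + n) = s ++ pre (fun i => ω (s.length + i)) n := by
  rw [pre_add, show pre ω s.length = s from hω]

end Prefixes

section Supermartingales

variable {E : ℕ → (X → EReal) → EReal} {S T : List X → EReal}

theorem isSupermartingale_const (hE : ∀ n, IsOPC (E n)) (d : ℝ) :
    IsSupermartingale E fun _ => (d : EReal) :=
  fun u => ((hE u.length).2.2.2 d).le

theorem IsSupermartingale.const_mul (hS : IsSupermartingale E S) (hE : ∀ n, IsOPC (E n))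
    {c : ℝ} (hc : 0 < c) : IsSupermartingale E fun u => (c : EReal) * S u := by
  intro u
  rw [(hE u.length).2.1 c hc]
  exact mul_le_mul_of_nonneg_left (hS u) (EReal.coe_nonneg.2 hc.le)

theorem IsSupermartingale.add (hS : IsSupermartingale E S) (hT : IsSupermartingale E T)
    (hE : ∀ n, IsOPC (E n)) : IsSupermartingale E fun u => S u + T u :=
  fun u => ((hE _).2.2.1 _ _).trans (add_le_add (hS u) (hT u))

theorem IsSupermartingale.comp_append (hS : IsSupermartingale E S) (s : List X) :
    IsSupermartingale (fun n => E (s.length + n)) fun u => S (s ++ u) := by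
  intro u
  simpa only [List.length_append, List.append_assoc] using hS (s ++ u)

open Classical in
/-- The process that runs `F` from the situation `s` on and is `⊤` in every situation that does not
extend `s`. -/
def extendTop (s : List X) (F : List X → EReal) (t : List X) : EReal :=
  if s <+: t then F (t.drop s.length) else ⊤

theorem extendTop_append (s : List X) (F : List X → EReal) (u : List X) :
    extendTop s F (s ++ u) = F u := by
  simp [extendTop]

theorem isSupermartingale_extendTop {s : List X} {F : List X → EReal}
    (hF : IsSupermartingale (fun n => E (s.length + n)) F) :
    IsSupermartingale E (extendTop s F) := by
  intro t
  by_cases ht : s <+: t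
  · obtain ⟨u, rfl⟩ := ht
    simpa only [List.append_assoc, extendTop_append, List.length_append] using hF u
  · simp [extendTop, ht]

theorem bddBelowFn_extendTop {F : List X → EReal} (hF : BddBelowFn F) (s : List X) :
    BddBelowFn (extendTop s F) := by
  obtain ⟨c, hc⟩ := hF
  refine ⟨c, fun t => ?_⟩
  unfold extendTop
  split_ifs
  exacts [hc _, le_top]

end Supermartingales

section TestProcess

theorem coe_toReal_of_one_le {y : EReal} (h : 1 ≤ y) (hy : y ≠ ⊤) : (y.toReal : EReal) = y :=
  EReal.coe_toReal hy (ne_bot_of_le_ne_bot (EReal.coe_ne_bot 1) h)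

/-- The values of `V` on the prefixes of the situation `u`, as a real sequence; it is constant from
the index `u.length` on. Infinite values are read as `0`. -/
def history (V : List X → EReal) (u : List X) (k : ℕ) : ℝ := (V (u.take k)).toReal

/-- `V` is infinite at some point on the way to the situation `u`. -/
def HitsTop (V : List X → EReal) (u : List X) : Prop := ∃ q, q <+: u ∧ V q = ⊤

open Classical in
/-- The capital of the rebalanced strategy betting on `V`, set to `⊤` forever once `V` has been
infinite. -/
def testProcess (ρ : ℝ) (V : List X → EReal) (u : List X) : EReal :=
  if HitsTop V u then ⊤ else (capital ρ (history V u) u.length : ℝ)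

variable {E : ℕ → (X → EReal) → EReal} {V : List X → EReal} {ρ : ℝ}

theorem hitsTop_append_singleton {u : List X} {x : X} :
    HitsTop V (u ++ [x]) ↔ HitsTop V u ∨ V (u ++ [x]) = ⊤ := by
  simp only [HitsTop, List.prefix_concat_iff, or_and_right, exists_or, exists_eq_left]
  exact or_comm

theorem hitsTop_pre_iff {ω : ℕ → X} {n : ℕ} :
    HitsTop V (pre ω n) ↔ ∃ k ≤ n, V (pre ω k) = ⊤ := by
  constructor
  · rintro ⟨q, hq, hVq⟩
    have hq_len : q.length ≤ n := by simpa [pre] using hq.length_le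
    refine ⟨q.length, hq_len, ?_⟩
    rwa [← take_pre ω hq_len, ← List.prefix_iff_eq_take.1 hq]
  · rintro ⟨k, hk, hVk⟩
    exact ⟨pre ω k, take_pre ω hk ▸ List.take_prefix k _, hVk⟩

theorem one_le_history (hV : ∀ u, 1 ≤ V u) {u : List X} (hu : ¬ HitsTop V u) (k : ℕ) :
    1 ≤ history V u k := by
  have h_fin : V (u.take k) ≠ ⊤ := fun h => hu ⟨_, List.take_prefix k u, h⟩
  exact_mod_cast (coe_toReal_of_one_le (hV _) h_fin).symm ▸ hV (u.take k)

theorem capital_history_append_singleton (ρ : ℝ) (V : List X → EReal) (u : List X) (x : X) :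
    capital ρ (history V (u ++ [x])) (u ++ [x]).length =
      capital ρ (history V u) u.length +
        ((V (u ++ [x])).toReal - (V u).toReal) / reference ρ (history V u) u.length := by
  have h_past : ∀ k ≤ u.length, history V (u ++ [x]) k = history V u k := fun k hk => by
    rw [history, history, List.take_append_of_le_length hk]
  rw [List.length_append, List.length_singleton, capital_succ, capital_congr h_past,
    reference_congr h_past, h_past _ le_rfl]
  simp [history, List.take_of_length_le]

theorem capital_history_pre (ρ : ℝ) (V : List X → EReal) (ω : ℕ → X) (n : ℕ) :
    capital ρ (history V (pre ω n)) (pre ω n).length =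
      capital ρ (fun k => (V (pre ω k)).toReal) n := by
  rw [show (pre ω n).length = n by simp [pre]]
  exact capital_congr fun k hk => by rw [history, take_pre ω hk]

theorem testProcess_nonneg (hV : ∀ u, 1 ≤ V u) (u : List X) : 0 ≤ testProcess ρ V u := by
  unfold testProcess
  split_ifs with hu
  · exact le_top
  · exact_mod_cast capital_nonneg (one_le_history hV hu) u.length

theorem testProcess_nil_ne_top (h : V [] ≠ ⊤) : testProcess ρ V [] ≠ ⊤ := by
  simp [testProcess, HitsTop, h]

theorem isSupermartingale_testProcess (hS : IsSupermartingale E V) (hE : ∀ n, IsOPC (E n))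
    (hV : ∀ u, 1 ≤ V u) : IsSupermartingale E (testProcess ρ V) := by
  intro u
  by_cases hu : HitsTop V u
  · simp [testProcess, hu]
  have hVu : V u ≠ ⊤ := fun h => hu ⟨u, List.prefix_rfl, h⟩
  set a := capital ρ (history V u) u.length with ha
  set r := reference ρ (history V u) u.length with hr
  have stake_pos : 0 < r⁻¹ :=
    inv_pos.2 (one_pos.trans_le (one_le_reference (one_le_history hV hu) _))
  set d := a - r⁻¹ * (V u).toReal with hd
  have next_le (x : X) : testProcess ρ V (u ++ [x]) ≤ (r⁻¹ : ℝ) * V (u ++ [x]) + d := by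
    by_cases hx : V (u ++ [x]) = ⊤
    · simp [hx, EReal.coe_mul_top_of_pos stake_pos]
    · have h_fin : ¬ HitsTop V (u ++ [x]) := by simp [hitsTop_append_singleton, hu, hx]
      rw [testProcess, if_neg h_fin, capital_history_append_singleton, ← ha, ← hr,
        ← coe_toReal_of_one_le (hV _) hx, EReal.toReal_coe]
      norm_cast
      rw [hd, div_eq_inv_mul]
      linarith
  calc
    E u.length (fun x => testProcess ρ V (u ++ [x]))
      ≤ E u.length (fun x => (r⁻¹ : ℝ) * V (u ++ [x]) + d) := (hE _).1 _ _ next_le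
    _ ≤ (r⁻¹ : ℝ) * V u + d :=
      ((hS.const_mul hE stake_pos).add (isSupermartingale_const hE d) hE) u
    _ = testProcess ρ V u := by
      rw [testProcess, if_neg hu, ← ha, ← coe_toReal_of_one_le (hV u) hVu]
      norm_cast
      rw [hd]
      ring

theorem tendsto_testProcess_or_le_sq_mul (hρ : 1 < ρ) (hV : ∀ u, 1 ≤ V u) (ω : ℕ → X) :
    Tendsto (fun n => testProcess ρ V (pre ω n)) atTop (𝓝 ⊤) ∨
      ∃ N, ∀ m ≥ N, ∀ n ≥ N, V (pre ω m) ≤ (ρ ^ 2 : ℝ) * V (pre ω n) := by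
  by_cases h_top : ∃ k, V (pre ω k) = ⊤
  · obtain ⟨k, hk⟩ := h_top
    refine .inl (tendsto_const_nhds.congr' ?_)
    filter_upwards [eventually_ge_atTop k] with n hn
    rw [testProcess, if_pos (hitsTop_pre_iff.2 ⟨k, hn, hk⟩)]
  push Not at h_top
  have coe_v (n : ℕ) : ((V (pre ω n)).toReal : EReal) = V (pre ω n) :=
    coe_toReal_of_one_le (hV _) (h_top n)
  have one_le_v (n : ℕ) : 1 ≤ (V (pre ω n)).toReal := by
    exact_mod_cast (coe_v n).symm ▸ hV (pre ω n)
  have test_eq (n : ℕ) :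
      testProcess ρ V (pre ω n) = (capital ρ (fun k => (V (pre ω k)).toReal) n : ℝ) := by
    have h_fin : ¬ HitsTop V (pre ω n) := fun h =>
      let ⟨k, _, hk⟩ := hitsTop_pre_iff.1 h
      h_top k hk
    rw [testProcess, if_neg h_fin, capital_history_pre]
  simp only [test_eq]
  refine (tendsto_capital_or_le_sq_mul hρ one_le_v).imp EReal.tendsto_coe_atTop.comp ?_
  rintro ⟨N, hN⟩
  refine ⟨N, fun m hm n hn => ?_⟩
  rw [← coe_v m, ← coe_v n]
  exact_mod_cast hN m hm n hn

end TestProcess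

section LimsupLeLiminf

variable {E : ℕ → (X → EReal) → EReal} {S V : List X → EReal}

theorem IsSupermartingale.exists_test (hS : IsSupermartingale E V) (hE : ∀ n, IsOPC (E n))
    (hV : ∀ u, 1 ≤ V u) (h_nil : V [] ≠ ⊤) {c : ℝ} (hc : 1 < c) :
    ∃ T, IsSupermartingale E T ∧ (∀ u, 0 ≤ T u) ∧ T [] ≠ ⊤ ∧ ∀ ω,
      Tendsto (fun n => T (pre ω n)) atTop (𝓝 ⊤) ∨
        ∃ N, ∀ m ≥ N, ∀ n ≥ N, V (pre ω m) ≤ c * V (pre ω n) := by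
  refine ⟨testProcess √c V, isSupermartingale_testProcess hS hE hV, testProcess_nonneg hV,
    testProcess_nil_ne_top h_nil, fun ω => ?_⟩
  have h_path := tendsto_testProcess_or_le_sq_mul (Real.lt_sqrt_of_sq_lt (by rwa [one_pow])) hV ω
  rwa [Real.sq_sqrt (zero_le_one.trans hc.le)] at h_path

theorem limsup_le_liminf_mul_add {v t : ℕ → EReal} {c ε : ℝ} (hc : 0 ≤ c) (hε : 0 < ε)
    (hv : ∀ n, 0 ≤ v n) (ht : ∀ n, 0 ≤ t n)
    (h : Tendsto t atTop (𝓝 ⊤) ∨ ∃ N, ∀ m ≥ N, ∀ n ≥ N, v m ≤ c * v n) :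
    limsup v atTop ≤ liminf (fun n => c * v n + ε * t n) atTop := by
  have hcv (n : ℕ) : 0 ≤ (c : EReal) * v n := mul_nonneg (EReal.coe_nonneg.2 hc) (hv n)
  have hεt (n : ℕ) : 0 ≤ (ε : EReal) * t n := mul_nonneg (EReal.coe_nonneg.2 hε.le) (ht n)
  rcases h with ht_top | ⟨N, hN⟩
  · have hεt_top : Tendsto (fun n => ε * t n) atTop (𝓝 ⊤) := by
      simpa [EReal.coe_mul_top_of_pos hε] using
        EReal.Tendsto.const_mul (a := ε) ht_top (by simp) (by simp)
    calc
      limsup v atTop ≤ ⊤ := le_top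
      _ = liminf (fun n => ε * t n) atTop := hεt_top.liminf_eq.symm
      _ ≤ _ := liminf_le_liminf (.of_forall fun n => le_add_of_nonneg_left (hcv n))
  · refine le_liminf_of_le (by isBoundedDefault) ?_
    filter_upwards [eventually_ge_atTop N] with n hn
    refine limsup_le_of_le (by isBoundedDefault) ?_
    filter_upwards [eventually_ge_atTop N] with m hm
    exact (hN m hm n hn).trans (le_add_of_nonneg_right (hεt n))

theorem limsup_add_const_le_liminf_add_const {ι : Type*} {l : Filter ι} [l.NeBot]
    {f g : ι → EReal} (h : limsup f l ≤ liminf g l) (d : ℝ) :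
    limsup (fun n => f n + d) l ≤ liminf (fun n => g n + d) l := by
  calc
    limsup (fun n => f n + d) l ≤ limsup f l + limsup (fun _ => (d : EReal)) l :=
      EReal.limsup_add_le (by simp) (by simp)
    _ ≤ liminf g l + liminf (fun _ => (d : EReal)) l := by
      rw [limsup_const, liminf_const]
      gcongr
    _ ≤ liminf (fun n => g n + d) l := EReal.le_liminf_add

theorem exists_one_lt_forall_exists_mul_add_le {v z : ℝ} (hv : 0 < v) (hz : v < z) :
    ∃ c > 1, ∀ t ≥ 0, ∃ ε > 0, c * v + ε * t ≤ z := by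
  obtain ⟨c, hc, hcz⟩ := exists_between ((one_lt_div hv).2 hz)
  have h_room : 0 < z - c * v := sub_pos.2 ((lt_div_iff₀ hv).1 hcz)
  refine ⟨c, hc, fun t ht => ⟨(z - c * v) / (t + 1), by positivity, ?_⟩⟩
  have h_cost : (z - c * v) / (t + 1) * t ≤ z - c * v := by
    rw [div_mul_eq_mul_div, div_le_iff₀ (by positivity)]
    gcongr
    exact le_add_of_nonneg_right zero_le_one
  linarith

theorem IsSupermartingale.exists_limsup_le_liminf_of_one_le (hS : IsSupermartingale E V)
    (hE : ∀ n, IsOPC (E n)) (hV : ∀ u, 1 ≤ V u) {z : ℝ} (hz : V [] < z) :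
    ∃ F, IsSupermartingale E F ∧ (∀ u, 0 ≤ F u) ∧ F [] ≤ z ∧
      ∀ ω, limsup (fun n => V (pre ω n)) atTop ≤ liminf (fun n => F (pre ω n)) atTop := by
  have h_nil : V [] ≠ ⊤ := hz.ne_top
  have hV_nonneg (u : List X) : 0 ≤ V u := zero_le_one.trans (hV u)
  have coe_v : ((V []).toReal : EReal) = V [] := coe_toReal_of_one_le (hV []) h_nil
  have v_lt : (V []).toReal < z := by rwa [← coe_v, EReal.coe_lt_coe_iff] at hz
  have v_pos : 0 < (V []).toReal := EReal.toReal_pos (one_pos.trans_le (hV [])) h_nil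
  obtain ⟨c, hc, h_test⟩ : ∃ c > 1, ∀ t ≥ 0, ∃ ε > 0, c * (V []).toReal + ε * t ≤ z :=
    exists_one_lt_forall_exists_mul_add_le v_pos v_lt
  obtain ⟨T, hT, hT_nonneg, hT_nil, h_path⟩ := hS.exists_test hE hV h_nil hc
  obtain ⟨ε, hε, h_cost⟩ := h_test (T []).toReal (EReal.toReal_nonneg (hT_nonneg []))
  have hc_pos : 0 < c := one_pos.trans hc
  refine ⟨fun u => c * V u + ε * T u, (hS.const_mul hE hc_pos).add (hT.const_mul hE hε) hE,
    fun u => ?_, ?_, fun ω => ?_⟩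
  · exact add_nonneg (mul_nonneg (EReal.coe_nonneg.2 hc_pos.le) (hV_nonneg u))
      (mul_nonneg (EReal.coe_nonneg.2 hε.le) (hT_nonneg u))
  · have coe_t : ((T []).toReal : EReal) = T [] :=
      EReal.coe_toReal hT_nil (ne_bot_of_le_ne_bot EReal.zero_ne_bot (hT_nonneg []))
    beta_reduce
    rw [← coe_v, ← coe_t]
    exact_mod_cast h_cost
  · exact limsup_le_liminf_mul_add hc_pos.le hε (fun n => hV_nonneg _) (fun n => hT_nonneg _)
      (h_path ω)

theorem IsSupermartingale.exists_limsup_le_liminf (hS : IsSupermartingale E S)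
    (hE : ∀ n, IsOPC (E n)) (hS_bdd : BddBelowFn S) {z : ℝ} (hz : S [] < z) :
    ∃ F, IsSupermartingale E F ∧ BddBelowFn F ∧ F [] ≤ z ∧
      ∀ ω, limsup (fun n => S (pre ω n)) atTop ≤ liminf (fun n => F (pre ω n)) atTop := by
  obtain ⟨b, hb⟩ := hS_bdd
  set d : ℝ := 1 - b with hd
  have one_le_shift (u : List X) : 1 ≤ S u + d := by
    calc
      (1 : EReal) = b + d := by rw [← EReal.coe_add, hd, add_sub_cancel, EReal.coe_one]
      _ ≤ S u + d := by gcongr; exact hb u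
  have hz' : S [] + d < (z + d : ℝ) := EReal.add_lt_add_right_coe hz d
  obtain ⟨F, hF, hF_nonneg, hFz, hSF⟩ :=
    (hS.add (isSupermartingale_const hE d) hE).exists_limsup_le_liminf_of_one_le hE one_le_shift hz'
  refine ⟨fun u => F u + (-d : ℝ), hF.add (isSupermartingale_const hE (-d)) hE,
    ⟨-d, fun u => le_add_of_nonneg_left (hF_nonneg u)⟩, ?_, fun ω => ?_⟩
  · calc
      F [] + (-d : ℝ) ≤ (z + d : ℝ) + (-d : ℝ) := by gcongr
      _ = z := by rw [← EReal.coe_add, add_neg_cancel_right]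
  · have shift_back (u : List X) : S u + d + (-d : ℝ) = S u := by
      rw [add_assoc, ← EReal.coe_add, add_neg_cancel, EReal.coe_zero, add_zero]
    simpa only [shift_back] using limsup_add_const_le_liminf_add_const (hSF ω) (-d)

theorem limsup_pre_of_mem_Gamma {s : List X} {ω : ℕ → X} (hω : ω ∈ Gamma s) (S : List X → EReal) :
    limsup (fun n => S (pre ω n)) atTop =
      limsup (fun n => S (s ++ pre (fun i => ω (s.length + i)) n)) atTop := by
  rw [← limsup_nat_add _ s.length]
  simp only [add_comm _ s.length, pre_length_add hω]

theorem liminf_pre_of_mem_Gamma {s : List X} {ω : ℕ → X} (hω : ω ∈ Gamma s) (S : List X → EReal) :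
    liminf (fun n => S (pre ω n)) atTop =
      liminf (fun n => S (s ++ pre (fun i => ω (s.length + i)) n)) atTop := by
  rw [← liminf_nat_add _ s.length]
  simp only [add_comm _ s.length, pre_length_add hω]

theorem IsSupermartingale.exists_limsup_le_liminf_on_Gamma (hS : IsSupermartingale E S)
    (hE : ∀ n, IsOPC (E n)) (hS_bdd : BddBelowFn S) (s : List X) {z : ℝ} (hz : S s < z) :
    ∃ F, IsSupermartingale E F ∧ BddBelowFn F ∧ F s ≤ z ∧ ∀ ω ∈ Gamma s,
      limsup (fun n => S (pre ω n)) atTop ≤ liminf (fun n => F (pre ω n)) atTop := by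
  have hSs_bdd : BddBelowFn fun u => S (s ++ u) := hS_bdd.imp fun c hc u => hc (s ++ u)
  obtain ⟨F, hF, hF_bdd, hFz, hSF⟩ := (hS.comp_append s).exists_limsup_le_liminf
    (fun n => hE (s.length + n)) hSs_bdd (by rwa [List.append_nil])
  refine ⟨extendTop s F, isSupermartingale_extendTop hF, bddBelowFn_extendTop hF_bdd s, ?_,
    fun ω hω => ?_⟩
  · simpa only [List.append_nil] using (extendTop_append s F []).trans_le hFz
  · rw [limsup_pre_of_mem_Gamma hω, liminf_pre_of_mem_Gamma hω]
    simpa only [extendTop_append] using hSF fun i => ω (s.length + i)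

end LimsupLeLiminf

/-- Replacing `liminf` by `limsup` in the definition of the conditional upper
expectation does not change its value. -/
theorem upExp_eq_inf_limsup [Nonempty X]
    (E : ℕ → (X → EReal) → EReal) (hE : ∀ n, IsOPC (E n))
    (ξ : (ℕ → X) → EReal) (s : List X) :
    upExp E ξ s =
      sInf {a | ∃ S : List X → EReal, IsSupermartingale E S ∧ BddBelowFn S ∧
        (∀ ω ∈ Gamma s, ξ ω ≤ limsup (fun n => S (pre ω n)) atTop) ∧ S s = a} := by
  apply le_antisymm
  · apply le_sInf
    rintro _ ⟨S, hS, hS_bdd, hξ, rfl⟩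
    refine EReal.le_of_forall_lt_iff_le.1 fun z hz => ?_
    obtain ⟨F, hF, hF_bdd, hFz, hSF⟩ :=
      hS.exists_limsup_le_liminf_on_Gamma hE hS_bdd s hz
    have upExp_le_F : upExp E ξ s ≤ F s :=
      sInf_le ⟨F, hF, hF_bdd, fun ω hω => (hξ ω hω).trans (hSF ω hω), rfl⟩
    exact upExp_le_F.trans hFz
  · apply sInf_le_sInf
    rintro _ ⟨S, hS, hS_bdd, hξ, rfl⟩
    exact ⟨S, hS, hS_bdd, fun ω hω => (hξ ω hω).trans liminf_le_limsup, rfl⟩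

end

end GTP
end
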